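/- If (g_n) is regularly varying of index γ−1 with γ ∈ (0,1) and ultimately positive, then the partial sums g_{[0,n)} = ∑_{0 ≤ i < n} g_i satisfy g_{[0,n)} ∼ n·g_n/γ as n → ∞; in particular (g_{[0,n)}) is regularly varying of index γ and diverges to infinity. -/

import Mathlib

open Filter Topology

/-!
Write `d n = (n+1)^γ - n^γ`, so that `d n ∼ γ n^(γ-1)` and `∑_{i<n} d i = n^γ` exactly. The
quotient `L n = g n / d n` is then slowly varying: `L ⌊l n⌋ / L n → 1` for every `l > 0`.

* Pointwise slow variation is upgraded to local uniformity (`locally_uniform`) by Baire's theorem: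
  the sets of `x` such that `|L ⌊e^x n⌋ / L n - 1| ≤ ε` for all `n ≥ N` cover `ℝ`, so one of them is
  dense in an interval, and right-continuity of the floor function turns density into containment.
  Hence for every `η > 0` there is `c < 1` with `|L i / L n - 1| ≤ η` for `⌊c n⌋ ≤ i < n`, `n` large.

* Put `r n = (∑_{i<n} g i) / (L n * n^γ)` and `m = ⌊c n⌋`. Splitting the sum at `m` gives
  `|r n - 1| ≤ (c^γ + o(1)) |r m - 1| + η (1 - c^γ) + o(1)`. As `c^γ < 1` this is a contraction, whose
  fixed point is at most a constant times `η`, uniformly in `c`; so `r n → 1` (`karamata_ratio`).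

Regular variation of the partial sums follows from that of `L n * n^γ`. Divergence holds because the
partial sums are eventually increasing and positive, while a finite positive limit would force
the ratio at `2n` and `n` to tend to `1` instead of `2^γ`.
-/

/-- A sequence `(a_n)` is regularly varying of index `ρ` if
`a_{⌊l n⌋}/a_n → l^ρ` for every `l > 0`. -/
def RegVarSeq (a : ℕ → ℝ) (ρ : ℝ) : Prop :=
  ∀ l : ℝ, 0 < l →
    Tendsto (fun n : ℕ => a ⌊l * (n : ℝ)⌋₊ / a n) atTop (𝓝 (l ^ ρ))

/-! ### Limits of floors -/

lemma tendsto_floor_mul {l : ℝ} (hl : 0 < l) :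
    Tendsto (fun n : ℕ => ⌊l * (n : ℝ)⌋₊) atTop atTop :=
  tendsto_nat_floor_atTop.comp
    (Tendsto.const_mul_atTop hl tendsto_natCast_atTop_atTop)

lemma tendsto_floor_ratio {l : ℝ} (hl : 0 < l) :
    Tendsto (fun n : ℕ => (⌊l * (n : ℝ)⌋₊ : ℝ) / n) atTop (𝓝 l) :=
  (tendsto_nat_floor_mul_div_atTop hl.le).comp tendsto_natCast_atTop_atTop

lemma tendsto_floor_rpow_ratio {l : ℝ} (hl : 0 < l) (ρ : ℝ) :
    Tendsto (fun n : ℕ => (⌊l * (n : ℝ)⌋₊ : ℝ) ^ ρ / (n : ℝ) ^ ρ) atTop (𝓝 (l ^ ρ)) := by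
  refine ((tendsto_floor_ratio hl).rpow_const (p := ρ) (Or.inl hl.ne')).congr fun n => ?_
  exact Real.div_rpow (Nat.cast_nonneg _) (Nat.cast_nonneg _) _

/-! ### Local uniformity of slow variation -/

/-- Baire category step: a slowly varying sequence is uniformly close to `L n` on some window
`a n < i < b n`. -/
lemma exists_window {L : ℕ → ℝ}
    (hL : ∀ l : ℝ, 0 < l → Tendsto (fun n : ℕ => L ⌊l * (n : ℝ)⌋₊ / L n) atTop (𝓝 1))
    {ε : ℝ} (hε : 0 < ε) :
    ∃ a b : ℝ, 0 < a ∧ a < b ∧ ∃ N : ℕ, ∀ n ≥ N, ∀ i : ℕ,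
      a * n < i → (i : ℝ) < b * n → |L i / L n - 1| ≤ ε := by
  let E : ℕ → Set ℝ := fun N =>
    {x | ∀ n ≥ N, |L ⌊Real.exp x * (n : ℝ)⌋₊ / L n - 1| ≤ ε}
  have hcover : ⋃ N, closure (E N) = Set.univ := by
    refine Set.eq_univ_of_forall fun x => ?_
    have h := (Metric.tendsto_atTop.1 (hL (Real.exp x) (Real.exp_pos x))) ε hε
    obtain ⟨N, hN⟩ := h
    refine Set.mem_iUnion.2 ⟨N, subset_closure fun n hn => ?_⟩
    have := hN n hn
    rw [Real.dist_eq] at this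
    exact this.le
  obtain ⟨N, x₀, hx₀⟩ :=
    nonempty_interior_of_iUnion_of_closed (fun N => isClosed_closure (s := E N)) hcover
  obtain ⟨δ, hδ, hball⟩ := Metric.mem_nhds_iff.1 (mem_interior_iff_mem_nhds.1 hx₀)
  rw [Real.ball_eq_Ioo] at hball
  refine ⟨Real.exp (x₀ - δ), Real.exp (x₀ + δ), Real.exp_pos _,
    Real.exp_lt_exp.2 (by linarith), N, fun n hn i hai hib => ?_⟩
  have hn0 : (0 : ℝ) < n := by
    rcases Nat.eq_zero_or_pos n with h | h
    · subst h
      simp only [Nat.cast_zero, mul_zero] at hai hib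
      linarith
    · exact_mod_cast h
  have hi0 : (0 : ℝ) < i := lt_trans (mul_pos (Real.exp_pos _) hn0) hai
  -- A point slightly to the right of `log (i / n)`, where `⌊e^y n⌋ = i` on a neighbourhood.
  obtain ⟨s, hs1, hs2⟩ := exists_between (lt_min hib (lt_add_one (i : ℝ)))
  have hs0 : 0 < s := hi0.trans hs1
  have hes : Real.exp (Real.log (s / n)) * n = s := by
    rw [Real.exp_log (by positivity)]; field_simp
  have hmem : Real.log (s / n) ∈ closure (E N) := by
    apply hball
    constructor
    · rw [Real.lt_log_iff_exp_lt (by positivity), lt_div_iff₀ hn0]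
      linarith
    · rw [Real.log_lt_iff_lt_exp (by positivity), div_lt_iff₀ hn0]
      exact hs2.trans_le (min_le_left _ _)
  have hcont : Continuous fun y : ℝ => Real.exp y * (n : ℝ) := by fun_prop
  obtain ⟨y, hyU, hyE⟩ := mem_closure_iff.1 hmem
    ((fun y : ℝ => Real.exp y * (n : ℝ)) ⁻¹' Set.Ioo (i : ℝ) (i + 1))
    (isOpen_Ioo.preimage hcont)
    (by
      rw [Set.mem_preimage, hes]
      exact ⟨hs1, hs2.trans_le (min_le_right _ _)⟩)
  have hfl : ⌊Real.exp y * (n : ℝ)⌋₊ = i :=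
    (Nat.floor_eq_iff (by positivity)).2 ⟨hyU.1.le, hyU.2⟩
  have := hyE n hn
  rwa [hfl] at this

/-- Two indices `i < k` with `i / k` close to `1` lie in a common window of `exists_window`, so
`L i / L k` is close to `1`. -/
lemma locally_uniform {L : ℕ → ℝ} (hpos : ∀ᶠ n in atTop, 0 < L n)
    (hL : ∀ l : ℝ, 0 < l → Tendsto (fun n : ℕ => L ⌊l * (n : ℝ)⌋₊ / L n) atTop (𝓝 1))
    {η : ℝ} (hη : 0 < η) :
    ∃ c : ℝ, 0 < c ∧ c < 1 ∧ ∀ᶠ n : ℕ in atTop, ∀ i : ℕ,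
      ⌊c * (n : ℝ)⌋₊ ≤ i → i < n → |L i / L n - 1| ≤ η := by
  obtain ⟨ε, hε, hε1, hε2⟩ : ∃ ε : ℝ, 0 < ε ∧ ε ≤ 1 / 2 ∧ 4 * ε ≤ η :=
    ⟨min (1 / 2) (η / 4), lt_min (by norm_num) (by linarith), min_le_left _ _,
      by linarith [min_le_right (1 / 2) (η / 4)]⟩
  obtain ⟨a, b, ha, hab, N, hN⟩ := exists_window hL hε
  obtain ⟨N', hN'⟩ := eventually_atTop.1 hpos
  have hsum : 0 < a + b := by linarith
  -- `c` is the midpoint of `2a/(a+b)` and `1`.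
  refine ⟨(3 * a + b) / (2 * (a + b)), div_pos (by linarith) (by linarith), ?_, ?_⟩
  · rw [div_lt_one (by positivity)]; linarith
  have hbig : Tendsto (fun k : ℕ => (2 / (a + b)) * (k : ℝ)) atTop atTop :=
    Tendsto.const_mul_atTop (by positivity) tendsto_natCast_atTop_atTop
  have hbig2 : Tendsto (fun k : ℕ => ((b - a) / (2 * (a + b))) * (k : ℝ)) atTop atTop :=
    Tendsto.const_mul_atTop (div_pos (by linarith) (by positivity)) tendsto_natCast_atTop_atTop
  filter_upwards [hpos, hbig.eventually_ge_atTop ((N : ℝ) + N'),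
    hbig2.eventually_gt_atTop (a + 1), eventually_gt_atTop 0] with k hk hk1 hk2 hk0 i hi hik
  have hk0' : (0 : ℝ) < k := by exact_mod_cast hk0
  set n := ⌈(2 / (a + b)) * (k : ℝ)⌉₊ with hn
  have hn1 : (2 / (a + b)) * (k : ℝ) ≤ n := Nat.le_ceil _
  have hn2 : (n : ℝ) < (2 / (a + b)) * (k : ℝ) + 1 := Nat.ceil_lt_add_one (by positivity)
  have hnN : N + N' ≤ n := by
    have : ((N + N' : ℕ) : ℝ) ≤ n := by push_cast; linarith
    exact_mod_cast this
  have hLn : 0 < L n := hN' n (by omega)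
  have hi1 : (3 * a + b) / (2 * (a + b)) * (k : ℝ) < i + 1 := by
    have h1 := Nat.lt_floor_add_one ((3 * a + b) / (2 * (a + b)) * (k : ℝ))
    have h2 : (⌊(3 * a + b) / (2 * (a + b)) * (k : ℝ)⌋₊ : ℝ) ≤ i := by exact_mod_cast hi
    linarith
  have hik' : (i : ℝ) < k := by exact_mod_cast hik
  have hkb : (k : ℝ) < b * n := by
    have h1 : (k : ℝ) < b * (2 / (a + b) * k) := by
      have : b * (2 / (a + b) * k) - k = (b - a) / (a + b) * k := by field_simp; ring
      have : 0 < (b - a) / (a + b) * k := mul_pos (div_pos (by linarith) hsum) hk0'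
      linarith
    have h2 := mul_le_mul_of_nonneg_left hn1 (ha.trans hab).le
    linarith
  have hai : a * n < i := by
    have h1 : a * n < a * (2 / (a + b) * k + 1) := mul_lt_mul_of_pos_left hn2 ha
    have h2 : (3 * a + b) / (2 * (a + b)) * (k : ℝ) - a * (2 / (a + b) * k)
        = (b - a) / (2 * (a + b)) * k := by field_simp; ring
    linarith
  have key : ∀ j : ℕ, a * n < j → (j : ℝ) < b * n → |L j - L n| ≤ ε * L n := by
    intro j h1 h2
    have h3 := hN n (by omega) j h1 h2
    have h4 : L j - L n = (L j / L n - 1) * L n := by field_simp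
    rw [h4, abs_mul, abs_of_pos hLn]
    exact mul_le_mul_of_nonneg_right h3 hLn.le
  have hi2 := abs_le.1 (key i hai (hik'.trans hkb))
  have hk3 := abs_le.1 (key k (hai.trans hik') hkb)
  have hLk : L n ≤ 2 * L k := by nlinarith
  have h5 : L i / L k - 1 = (L i - L k) / L k := by field_simp
  rw [h5, abs_div, abs_of_pos hk, div_le_iff₀ hk, abs_le]
  have h6 : ε * L n ≤ 2 * ε * L k := by nlinarith
  have h7 : 4 * ε * L k ≤ η * L k := mul_le_mul_of_nonneg_right hε2 hk.le
  constructor <;> linarith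

/-! ### Karamata's theorem for partial sums -/

/-- Asymptotic contraction along `n ↦ ⌊c n⌋`: eventually `x n` exceeds the fixed point
`b / (1 - a)` by at most any prescribed `δ > 0`. -/
lemma contraction {x : ℕ → ℝ} {a b c δ : ℝ} (ha0 : 0 ≤ a) (ha1 : a < 1)
    (hc0 : 0 < c) (hc1 : c < 1)
    (h : ∀ᶠ n : ℕ in atTop, x n ≤ a * x ⌊c * (n : ℝ)⌋₊ + b) (hδ : 0 < δ) :
    ∀ᶠ n in atTop, x n ≤ b / (1 - a) + δ := by
  have h1a : 0 < 1 - a := by linarith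
  set f := b / (1 - a) with hf
  have hfix : a * f + b = f := by rw [hf]; field_simp; ring
  obtain ⟨N, hN⟩ := eventually_atTop.1 h
  obtain ⟨B, hB0, hB⟩ : ∃ B : ℝ, 0 ≤ B ∧ ∀ n, x n - f ≤ B := by
    refine ⟨∑ i ∈ Finset.range (N + 1), |x i - f|, Finset.sum_nonneg fun i _ => abs_nonneg _, ?_⟩
    have hB0 : 0 ≤ ∑ i ∈ Finset.range (N + 1), |x i - f| :=
      Finset.sum_nonneg fun i _ => abs_nonneg _
    intro n
    induction n using Nat.strong_induction_on with
    | _ n ih =>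
      rcases Nat.lt_or_ge n (N + 1) with hn | hn
      · exact (le_abs_self _).trans
          (Finset.single_le_sum (f := fun i => |x i - f|) (fun i _ => abs_nonneg _)
            (Finset.mem_range.2 hn))
      · have hn0 : (0 : ℝ) < n := by exact_mod_cast (by omega : 0 < n)
        have hlt : ⌊c * (n : ℝ)⌋₊ < n := by
          rw [Nat.floor_lt (by positivity)]
          nlinarith
        have h1 := ih _ hlt
        have h2 := hN n (by omega)
        nlinarith
  have hiter : ∀ k : ℕ, ∀ᶠ n in atTop, x n - f ≤ a ^ k * B := by
    intro k
    induction k with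
    | zero => exact Eventually.of_forall fun n => by simpa using hB n
    | succ k ih =>
      filter_upwards [h, (tendsto_floor_mul hc0).eventually ih] with n h1 h2
      have h3 := mul_le_mul_of_nonneg_left h2 ha0
      have h4 : a ^ (k + 1) * B = a * (a ^ k * B) := by ring
      rw [h4]
      linarith
  have hlim : Tendsto (fun k : ℕ => a ^ k * B) atTop (𝓝 0) := by
    simpa using (tendsto_pow_atTop_nhds_zero_of_lt_one ha0 ha1).mul_const B
  obtain ⟨k, hk⟩ := (hlim.eventually_lt_const hδ).exists
  filter_upwards [hiter k] with n hn
  linarith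

lemma sum_range_rpow_diff {γ : ℝ} (hγ : 0 < γ) (n : ℕ) :
    ∑ i ∈ Finset.range n, (((i + 1 : ℕ) : ℝ) ^ γ - (i : ℝ) ^ γ) = (n : ℝ) ^ γ := by
  rw [Finset.sum_range_sub (fun i : ℕ => (i : ℝ) ^ γ)]
  simp [Real.zero_rpow hγ.ne']

lemma rpow_diff_pos {γ : ℝ} (hγ : 0 < γ) (n : ℕ) :
    0 < ((n + 1 : ℕ) : ℝ) ^ γ - (n : ℝ) ^ γ := by
  rw [sub_pos]
  exact Real.rpow_lt_rpow (Nat.cast_nonneg _) (by push_cast; linarith) hγ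

/-- Karamata's theorem with weights `d i = (i+1)^γ - i^γ`:
`∑_{i<n} L i * d i ∼ L n * n^γ` when `L` is slowly varying. -/
lemma karamata_ratio {γ : ℝ} (hγ : 0 < γ) {L : ℕ → ℝ} (hpos : ∀ᶠ n in atTop, 0 < L n)
    (hL : ∀ l : ℝ, 0 < l → Tendsto (fun n : ℕ => L ⌊l * (n : ℝ)⌋₊ / L n) atTop (𝓝 1)) :
    Tendsto (fun n : ℕ => (∑ i ∈ Finset.range n, L i * (((i + 1 : ℕ) : ℝ) ^ γ - (i : ℝ) ^ γ))
      / (L n * (n : ℝ) ^ γ)) atTop (𝓝 1) := by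
  set d : ℕ → ℝ := fun i => ((i + 1 : ℕ) : ℝ) ^ γ - (i : ℝ) ^ γ with hd
  set S : ℕ → ℝ := fun n => ∑ i ∈ Finset.range n, L i * d i with hS
  set r : ℕ → ℝ := fun n => S n / (L n * (n : ℝ) ^ γ) with hr
  have hdpos : ∀ i, 0 < d i := rpow_diff_pos hγ
  have hdsum : ∀ n, ∑ i ∈ Finset.range n, d i = (n : ℝ) ^ γ := sum_range_rpow_diff hγ
  change Tendsto r atTop (𝓝 1)
  -- The constant `5` is the fixed-point bound `4 η` of the contraction below plus a slack `η`.
  suffices H : ∀ η : ℝ, 0 < η → ∀ᶠ n in atTop, |r n - 1| ≤ 5 * η by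
    rw [Metric.tendsto_nhds]
    intro ε hε
    filter_upwards [H (ε / 10) (by positivity)] with n hn
    rw [Real.dist_eq]
    linarith
  intro η hη
  obtain ⟨c, hc0, hc1, hunif⟩ := locally_uniform hpos hL hη
  set q := c ^ γ with hq
  have hq0 : 0 < q := Real.rpow_pos_of_pos hc0 γ
  have hq1 : q < 1 := Real.rpow_lt_one hc0.le hc1 hγ
  have hp := tendsto_floor_rpow_ratio hc0 γ
  have hs := hL c hc0
  rw [← hq] at hp
  have hA := hs.mul hp
  rw [one_mul] at hA
  have hBlim := ((hp.const_sub 1).const_mul η).add ((hs.sub_const 1).abs.mul hp)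
  rw [sub_self, abs_zero, zero_mul, add_zero] at hBlim
  have hq2 : 0 < 1 - q := by linarith
  have hstep : ∀ᶠ n : ℕ in atTop,
      |r n - 1| ≤ (1 + q) / 2 * |r ⌊c * (n : ℝ)⌋₊ - 1| + 2 * η * (1 - q) := by
    filter_upwards [hunif, hpos, (tendsto_floor_mul hc0).eventually hpos,
      hA.eventually_lt_const (show q < (1 + q) / 2 by linarith),
      hBlim.eventually_lt_const (show η * (1 - q) < 2 * η * (1 - q) by
        nlinarith [mul_pos hη hq2]),
      eventually_gt_atTop 0, (tendsto_floor_mul hc0).eventually (eventually_gt_atTop 0)]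
      with n hu hLn hLm hAn hBn hn0 hm0
    set m := ⌊c * (n : ℝ)⌋₊ with hm
    have hn0' : (0 : ℝ) < n := by exact_mod_cast hn0
    have hm0' : (0 : ℝ) < m := by exact_mod_cast hm0
    have hmn : m ≤ n := by
      rw [hm]
      exact Nat.floor_le_of_le (by nlinarith)
    have hX : 0 < (n : ℝ) ^ γ := Real.rpow_pos_of_pos hn0' γ
    have hY : 0 < (m : ℝ) ^ γ := Real.rpow_pos_of_pos hm0' γ
    have hblock : |(S n - S m) / L n - ((n : ℝ) ^ γ - (m : ℝ) ^ γ)|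
        ≤ η * ((n : ℝ) ^ γ - (m : ℝ) ^ γ) := by
      have e1 : S n - S m = ∑ i ∈ Finset.Ico m n, L i * d i :=
        (Finset.sum_Ico_eq_sub _ hmn).symm
      have e2 : (n : ℝ) ^ γ - (m : ℝ) ^ γ = ∑ i ∈ Finset.Ico m n, d i := by
        rw [Finset.sum_Ico_eq_sub _ hmn, hdsum, hdsum]
      rw [e1, e2, Finset.sum_div, ← Finset.sum_sub_distrib, Finset.mul_sum]
      refine (Finset.abs_sum_le_sum_abs _ _).trans (Finset.sum_le_sum fun i hi => ?_)
      rw [Finset.mem_Ico] at hi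
      have e3 : L i * d i / L n - d i = (L i / L n - 1) * d i := by ring
      rw [e3, abs_mul, abs_of_pos (hdpos i)]
      exact mul_le_mul_of_nonneg_right (hu i hi.1 hi.2) (hdpos i).le
    have hdecomp : r n - 1 =
        ((S n - S m) / L n - ((n : ℝ) ^ γ - (m : ℝ) ^ γ)) / (n : ℝ) ^ γ
        + (L m / L n - 1) * ((m : ℝ) ^ γ / (n : ℝ) ^ γ)
        + (L m / L n * ((m : ℝ) ^ γ / (n : ℝ) ^ γ)) * (r m - 1) := by
      simp only [hr]
      field_simp
      ring
    have t1 : |((S n - S m) / L n - ((n : ℝ) ^ γ - (m : ℝ) ^ γ)) / (n : ℝ) ^ γ|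
        ≤ η * (1 - (m : ℝ) ^ γ / (n : ℝ) ^ γ) := by
      rw [abs_div, abs_of_pos hX, div_le_iff₀ hX]
      refine hblock.trans_eq ?_
      field_simp
    have hpp : 0 < (m : ℝ) ^ γ / (n : ℝ) ^ γ := div_pos hY hX
    have t3 : |(L m / L n * ((m : ℝ) ^ γ / (n : ℝ) ^ γ)) * (r m - 1)|
        ≤ (1 + q) / 2 * |r m - 1| := by
      rw [abs_mul, abs_of_pos (mul_pos (div_pos hLm hLn) hpp)]
      exact mul_le_mul_of_nonneg_right hAn.le (abs_nonneg _)
    have t2 : |(L m / L n - 1) * ((m : ℝ) ^ γ / (n : ℝ) ^ γ)|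
        = |L m / L n - 1| * ((m : ℝ) ^ γ / (n : ℝ) ^ γ) := by
      rw [abs_mul, abs_of_pos hpp]
    rw [hdecomp]
    refine (abs_add_three _ _ _).trans ?_
    linarith
  have := contraction (x := fun n => |r n - 1|) (a := (1 + q) / 2) (by linarith) (by linarith)
    hc0 hc1 hstep hη
  filter_upwards [this] with n hn
  have e : 2 * η * (1 - q) / (1 - (1 + q) / 2) = 4 * η := by
    have : 1 - (1 + q) / 2 = (1 - q) / 2 := by ring
    rw [this]
    field_simp
    ring
  rw [e] at hn
  linarith

/-! ### Passage to regularly varying sequences -/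

lemma rpow_diff_asymp (γ : ℝ) :
    Tendsto (fun n : ℕ => (((n + 1 : ℕ) : ℝ) ^ γ - (n : ℝ) ^ γ) / (n : ℝ) ^ (γ - 1))
      atTop (𝓝 γ) := by
  have h1 : HasDerivAt (fun x : ℝ => x ^ γ) γ 1 := by
    simpa using Real.hasDerivAt_rpow_const (x := 1) (p := γ) (Or.inl one_ne_zero)
  have h2 := hasDerivAt_iff_tendsto_slope_zero.1 h1
  have h3 : Tendsto (fun n : ℕ => ((n : ℝ))⁻¹) atTop (𝓝[≠] 0) := by
    refine tendsto_nhdsWithin_iff.2 ⟨tendsto_inv_atTop_nhds_zero_nat, ?_⟩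
    filter_upwards [eventually_gt_atTop 0] with n hn
    have : (n : ℝ) ≠ 0 := by exact_mod_cast hn.ne'
    simpa using this
  refine (h2.comp h3).congr' ?_
  filter_upwards [eventually_gt_atTop 0] with n hn
  have hn' : (0 : ℝ) < n := by exact_mod_cast hn
  have e1 : (1 : ℝ) + (n : ℝ)⁻¹ = ((n + 1 : ℕ) : ℝ) / n := by
    push_cast; field_simp
  have e2 : (n : ℝ) ^ (γ - 1) = (n : ℝ) ^ γ / n := by
    rw [Real.rpow_sub hn', Real.rpow_one]
  have hX : 0 < (n : ℝ) ^ γ := Real.rpow_pos_of_pos hn' γ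
  simp only [Function.comp_apply, smul_eq_mul, inv_inv]
  rw [e1, Real.div_rpow (Nat.cast_nonneg _) hn'.le, Real.one_rpow, e2]
  field_simp

/-- The quotient of a regularly varying sequence of index `γ - 1` by the weights
`(n+1)^γ - n^γ` is slowly varying. -/
lemma slowly_varying_quotient {γ : ℝ} (hγ : 0 < γ) {g : ℕ → ℝ} (hrv : RegVarSeq g (γ - 1))
    {l : ℝ} (hl : 0 < l) :
    Tendsto (fun n : ℕ =>
      (g ⌊l * (n : ℝ)⌋₊ / (((⌊l * (n : ℝ)⌋₊ + 1 : ℕ) : ℝ) ^ γ - (⌊l * (n : ℝ)⌋₊ : ℝ) ^ γ)) /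
      (g n / (((n + 1 : ℕ) : ℝ) ^ γ - (n : ℝ) ^ γ))) atTop (𝓝 1) := by
  have hdd := rpow_diff_asymp γ
  have hlp : l ^ (γ - 1) ≠ 0 := (Real.rpow_pos_of_pos hl _).ne'
  have hlim := (((hrv l hl).mul hdd).div (hdd.comp (tendsto_floor_mul hl)) hγ.ne').div
    (tendsto_floor_rpow_ratio hl (γ - 1)) hlp
  have e : l ^ (γ - 1) * γ / γ / l ^ (γ - 1) = 1 := by field_simp
  rw [e] at hlim
  refine hlim.congr' ?_
  filter_upwards [eventually_gt_atTop 0,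
    (tendsto_floor_mul hl).eventually (eventually_gt_atTop 0)] with n hn hm
  have hX : 0 < (n : ℝ) ^ (γ - 1) := Real.rpow_pos_of_pos (by exact_mod_cast hn) _
  have hY : 0 < (⌊l * (n : ℝ)⌋₊ : ℝ) ^ (γ - 1) := Real.rpow_pos_of_pos (by exact_mod_cast hm) _
  have hd1 := rpow_diff_pos hγ n
  have hd2 := rpow_diff_pos hγ ⌊l * (n : ℝ)⌋₊
  simp only [Pi.div_apply, Function.comp_apply]
  generalize ((n + 1 : ℕ) : ℝ) ^ γ - (n : ℝ) ^ γ = d1 at *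
  generalize ((⌊l * (n : ℝ)⌋₊ + 1 : ℕ) : ℝ) ^ γ - (⌊l * (n : ℝ)⌋₊ : ℝ) ^ γ = d2 at *
  field_simp

/-- An eventually positive and eventually increasing sequence that is regularly varying of
positive index diverges. -/
lemma tendsto_atTop_of_regVarSeq {S : ℕ → ℝ} {ρ : ℝ} (hρ : 0 < ρ)
    (hrv : RegVarSeq S ρ) (hpos : ∀ᶠ n in atTop, 0 < S n)
    (hmono : ∃ N, ∀ n ≥ N, S n ≤ S (n + 1)) : Tendsto S atTop atTop := by
  obtain ⟨N, hN⟩ := hmono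
  have hm : Monotone fun n => S (n + N) :=
    monotone_nat_of_le_succ fun n => by
      have := hN (n + N) (by omega)
      rwa [show n + N + 1 = n + 1 + N by ring] at this
  rcases tendsto_atTop_of_monotone hm with h | ⟨s, h⟩
  · exact (tendsto_add_atTop_iff_nat N).1 h
  · exfalso
    obtain ⟨k, hk⟩ := ((tendsto_add_atTop_nat N).eventually hpos).exists
    have hs : 0 < s := hk.trans_le (hm.ge_of_tendsto h k)
    have h' : Tendsto S atTop (𝓝 s) := (tendsto_add_atTop_iff_nat N).1 h
    have h1 := (h'.comp (tendsto_floor_mul (two_pos : (0 : ℝ) < 2))).div h' hs.ne'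
    have h2 := tendsto_nhds_unique h1 (hrv 2 two_pos)
    rw [div_self hs.ne'] at h2
    exact absurd h2 (Real.one_lt_rpow one_lt_two hρ).ne

/-- If `(g_n)` is ultimately positive and regularly varying of index
`γ - 1` with `γ ∈ (0,1)`, then the partial sums satisfy
`∑_{0 ≤ i < n} g_i ∼ n g_n / γ`; in particular the partial-sum sequence is regularly
varying of index `γ` and diverges to infinity. -/
theorem partial_sums_regvar
    (γ : ℝ) (hγ0 : 0 < γ) (hγ1 : γ < 1)
    (g : ℕ → ℝ) (hpos : ∃ N, ∀ n ≥ N, 0 < g n)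
    (hrv : RegVarSeq g (γ - 1)) :
    Tendsto (fun n : ℕ => (∑ i ∈ Finset.range n, g i) / ((n : ℝ) * g n / γ))
        atTop (𝓝 1) ∧
      RegVarSeq (fun n : ℕ => ∑ i ∈ Finset.range n, g i) γ ∧
      Tendsto (fun n : ℕ => ∑ i ∈ Finset.range n, g i) atTop atTop := by
  have hgpos : ∀ᶠ n in atTop, 0 < g n := eventually_atTop.2 hpos
  set d : ℕ → ℝ := fun i => ((i + 1 : ℕ) : ℝ) ^ γ - (i : ℝ) ^ γ with hd
  have hdpos : ∀ i, 0 < d i := rpow_diff_pos hγ0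
  set S : ℕ → ℝ := fun n => ∑ i ∈ Finset.range n, g i with hS
  set L : ℕ → ℝ := fun n => g n / d n with hLdef
  have hL : ∀ l : ℝ, 0 < l → Tendsto (fun n : ℕ => L ⌊l * (n : ℝ)⌋₊ / L n) atTop (𝓝 1) :=
    fun l hl => slowly_varying_quotient hγ0 hrv hl
  have hLpos : ∀ᶠ n in atTop, 0 < L n := hgpos.mono fun n hn => div_pos hn (hdpos n)
  have hr : Tendsto (fun n : ℕ => S n / (L n * (n : ℝ) ^ γ)) atTop (𝓝 1) := by
    refine (karamata_ratio hγ0 hLpos hL).congr fun n => ?_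
    congr 1
    exact Finset.sum_congr rfl fun i _ => div_mul_cancel₀ _ (hdpos i).ne'
  have hSpos : ∀ᶠ n in atTop, 0 < S n := by
    filter_upwards [hr.eventually_const_lt one_pos, hLpos, eventually_gt_atTop 0] with n h1 h2 h3
    have hX : 0 < (n : ℝ) ^ γ := Real.rpow_pos_of_pos (by exact_mod_cast h3) _
    exact (div_pos_iff_of_pos_right (mul_pos h2 hX)).1 h1
  have hSrv : RegVarSeq S γ := by
    intro l hl
    have hlim := (((hr.comp (tendsto_floor_mul hl)).div hr one_ne_zero).mul (hL l hl)).mul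
      (tendsto_floor_rpow_ratio hl γ)
    rw [div_one, one_mul, one_mul] at hlim
    refine hlim.congr' ?_
    filter_upwards [hSpos, hLpos, (tendsto_floor_mul hl).eventually hLpos, eventually_gt_atTop 0,
      (tendsto_floor_mul hl).eventually (eventually_gt_atTop 0)] with n h1 h2 h3 h4 h5
    have hX : 0 < (n : ℝ) ^ γ := Real.rpow_pos_of_pos (by exact_mod_cast h4) _
    have hY : 0 < (⌊l * (n : ℝ)⌋₊ : ℝ) ^ γ := Real.rpow_pos_of_pos (by exact_mod_cast h5) _
    simp only [Pi.div_apply, Function.comp_apply]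
    field_simp
  refine ⟨?_, hSrv, tendsto_atTop_of_regVarSeq hγ0 hSrv hSpos ?_⟩
  · have hlim := hr.mul ((tendsto_const_nhds (x := γ)).div (rpow_diff_asymp γ) hγ0.ne')
    rw [div_self hγ0.ne', one_mul] at hlim
    refine hlim.congr' ?_
    filter_upwards [hgpos, eventually_gt_atTop 0] with n h1 h2
    have hn : (0 : ℝ) < n := by exact_mod_cast h2
    have hX : 0 < (n : ℝ) ^ γ := Real.rpow_pos_of_pos hn _
    have hdn := hdpos n
    have e : (n : ℝ) ^ (γ - 1) = (n : ℝ) ^ γ / n := by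
      rw [Real.rpow_sub hn, Real.rpow_one]
    change S n / (g n / d n * (n : ℝ) ^ γ) * (γ / (d n / (n : ℝ) ^ (γ - 1))) =
      S n / ((n : ℝ) * g n / γ)
    rw [e]
    field_simp
  · obtain ⟨N, hN⟩ := hpos
    refine ⟨N, fun n hn => ?_⟩
    simp only [hS, Finset.sum_range_succ]
    linarith [hN n hn]
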